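/- (Convergence of the inner fixed-point iteration) Let N ≥ 1, k > 0, b a nonzero real, and let C₀ be a constant such that ‖∂_x ψ‖ ≤ C₀ N ‖ψ‖ for all ψ ∈ S_N. Let Y ∈ S_N be real-valued, let Z* ∈ S_N satisfy Z* = Y + (kb/2) F(Z*), and define the iteration Z₀ = Y and, for ν ≥ 0, Z_{ν+1} ∈ S_N the (unique) solution of (I + (kb/2)∂_x³) Z_{ν+1} = Y − (kb/2) P_N ∂_x( Z_ν²/2 ). Suppose |Z*|_∞ ≤ R and |Z_ν|_∞ ≤ R + 1 for all ν ≥ 0, and set Γ = (C₀/2) k |b| N (R + 1). If Γ < 1, then ‖Z* − Z_ν‖ ≤ Γ^ν ‖Z* − Z₀‖ for all ν ≥ 0; in particular Z_ν converges to Z* in L² as ν → ∞. -/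

import Mathlib

noncomputable section

namespace KdVSpec

/-- The L² inner product of two real-valued functions on `(-π, π)`. -/
def L2inner (u v : ℝ → ℝ) : ℝ := ∫ x in (-Real.pi)..Real.pi, u x * v x

/-- The L² norm of a real-valued function on `(-π, π)`. -/
def L2norm (u : ℝ → ℝ) : ℝ := Real.sqrt (∫ x in (-Real.pi)..Real.pi, (u x)^2)

/-- The sup norm of a real-valued function on `[-π, π]`. -/
def LinfNorm (u : ℝ → ℝ) : ℝ := sSup ((fun x => |u x|) '' Set.Icc (-Real.pi) Real.pi)

/-- The `W^{1,∞}` norm `‖v‖_{1,∞} = |v|_∞ + |∂ₓ v|_∞`. -/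
def norm1inf (u : ℝ → ℝ) : ℝ := LinfNorm u + LinfNorm (deriv u)

/-- The `k`-th Fourier coefficient of a (2π-periodic) function on `(-π,π)`. -/
def fCoeff (u : ℝ → ℝ) (k : ℤ) : ℂ :=
  (1 / (2 * Real.pi)) *
    ∫ x in (-Real.pi)..Real.pi, Complex.exp (-(Complex.I * (k : ℂ) * (x : ℂ))) * (u x : ℂ)

/-- The periodic Sobolev norm of order `μ`. -/
def sobNorm (μ : ℝ) (u : ℝ → ℝ) : ℝ :=
  Real.sqrt (∑' k : ℤ, (1 + (k : ℝ)^2) ^ μ * ‖fCoeff u k‖^2)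

/-- `v` is a (real-valued) trigonometric polynomial of degree at most `N`,
i.e. a member of `S_N = span{e^{ikx} : |k| ≤ N}`. -/
def InSN (N : ℕ) (v : ℝ → ℝ) : Prop :=
  ∃ c : ℤ → ℂ, ∀ x : ℝ,
    (v x : ℂ) = ∑ k ∈ Finset.Icc (-(N : ℤ)) (N : ℤ), c k * Complex.exp (Complex.I * (k : ℂ) * (x : ℂ))

/-- The orthogonal L²-projection onto `S_N`, `P_N v = Σ_{|k|≤N} v̂(k) e^{ikx}`. -/
def PN (N : ℕ) (u : ℝ → ℝ) : ℝ → ℝ := fun x =>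
  (∑ k ∈ Finset.Icc (-(N : ℤ)) (N : ℤ), fCoeff u k * Complex.exp (Complex.I * (k : ℂ) * (x : ℂ))).re

/-- Spatial derivative `∂ₓ`. -/
def dx (u : ℝ → ℝ) : ℝ → ℝ := deriv u

/-- Third spatial derivative `∂ₓ³`. -/
def dx3 (u : ℝ → ℝ) : ℝ → ℝ := deriv (deriv (deriv u))

/-- The map `F(v) = -∂ₓ³ v - P_N(v ∂ₓ v)` on `S_N`. -/
def Fmap (N : ℕ) (v : ℝ → ℝ) : ℝ → ℝ := fun x =>
  -(dx3 v x) - PN N (fun y => v y * dx v y) x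

/-- `u` solves the periodic KdV equation `u_t + u u_x + u_{xxx} = 0` on the time set `I`
(with 2π-periodicity in space). -/
def IsKdVSolution (u : ℝ → ℝ → ℝ) (I : Set ℝ) : Prop :=
  (∀ t ∈ I, ∀ x : ℝ, u t (x + 2 * Real.pi) = u t x) ∧
  (∀ t ∈ I, ∀ x : ℝ,
    deriv (fun s => u s x) t + u t x * dx (u t) x + dx3 (u t) x = 0)

/-- `w` is the semidiscrete Fourier–Galerkin approximation (with initial value `P_N u₀`)
on the time set `I`: `w(t) ∈ S_N`, `w` is differentiable in time, `w(0) = P_N u₀` and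
`(∂_t w + w ∂ₓ w + ∂ₓ³ w, χ) = 0` for every `χ ∈ S_N`. -/
def SemidiscreteOn (N : ℕ) (u0 : ℝ → ℝ) (w : ℝ → ℝ → ℝ) (I : Set ℝ) : Prop :=
  (∀ t ∈ I, InSN N (w t)) ∧
  (∀ x : ℝ, ∀ t ∈ I, DifferentiableAt ℝ (fun s => w s x) t) ∧
  (∀ x : ℝ, w 0 x = PN N u0 x) ∧
  (∀ t ∈ I, ∀ χ : ℝ → ℝ, InSN N χ →
    L2inner (fun x => deriv (fun s => w s x) t + w t x * dx (w t) x + dx3 (w t) x) χ = 0)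


lemma InSN.sub {N : ℕ} {u v : ℝ → ℝ} (hu : InSN N u) (hv : InSN N v) :
    InSN N (fun x => u x - v x) := by
  obtain ⟨c, hc⟩ := hu
  obtain ⟨d, hd⟩ := hv
  refine ⟨fun k => c k - d k, fun x => ?_⟩
  push_cast
  rw [hc, hd, ← Finset.sum_sub_distrib]
  exact Finset.sum_congr rfl fun k _ => by ring

lemma InSN.one (N : ℕ) : InSN N (fun _ => 1) := by
  refine ⟨fun k => if k = 0 then 1 else 0, fun x => ?_⟩
  rw [Finset.sum_eq_single 0]
  · simp
  · intro b _ hb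
    simp [hb]
  · intro h
    simp at h

lemma InSN.contDiff {N : ℕ} {u : ℝ → ℝ} (hu : InSN N u) : ContDiff ℝ 10 u := by
  obtain ⟨c, hc⟩ := hu
  have h : u = fun x : ℝ => Complex.reCLM (∑ k ∈ Finset.Icc (-(N : ℤ)) (N : ℤ),
      c k * Complex.exp (Complex.I * (k : ℂ) * (Complex.ofRealCLM x))) := by
    funext x
    simp only [Complex.ofRealCLM_apply, ← hc, Complex.reCLM_apply, Complex.ofReal_re]
  rw [h]
  fun_prop

lemma InSN.periodic {N : ℕ} {u : ℝ → ℝ} (hu : InSN N u) :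
    Function.Periodic u (2 * Real.pi) := by
  obtain ⟨c, hc⟩ := hu
  intro x
  have : ((u (x + 2 * Real.pi) : ℝ) : ℂ) = u x := by
    rw [hc, hc]
    refine Finset.sum_congr rfl fun k _ => ?_
    congr 1
    rw [Complex.exp_eq_exp_iff_exists_int]
    refine ⟨k, ?_⟩
    push_cast
    ring
  exact_mod_cast this

lemma periodic_deriv {u : ℝ → ℝ} {T : ℝ} (hu : Function.Periodic u T) :
    Function.Periodic (deriv u) T := by
  intro x
  rw [← deriv_comp_add_const]
  congr 1
  funext y
  exact hu y

/-- integral of a derivative of a periodic function vanishes -/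
lemma integral_deriv_periodic {f f' : ℝ → ℝ} (hf : ∀ x, HasDerivAt f (f' x) x)
    (hc : Continuous f') (hp : Function.Periodic f (2 * Real.pi)) :
    ∫ x in (-Real.pi)..Real.pi, f' x = 0 := by
  rw [intervalIntegral.integral_eq_sub_of_hasDerivAt (fun x _ => hf x)
    (hc.intervalIntegrable _ _)]
  have := hp (-Real.pi)
  rw [show -Real.pi + 2 * Real.pi = Real.pi by ring] at this
  rw [this, sub_self]

lemma cauchy_schwarz {f g : ℝ → ℝ} (hf : Continuous f) (hg : Continuous g) :
    ∫ x in (-Real.pi)..Real.pi, f x * g x ≤ L2norm f * L2norm g := by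
  have hle : -Real.pi ≤ Real.pi := by linarith [Real.pi_pos]
  have hA : 0 ≤ ∫ x in (-Real.pi)..Real.pi, (f x)^2 :=
    intervalIntegral.integral_nonneg hle fun x _ => sq_nonneg _
  have key : ∀ t : ℝ, 0 ≤ (∫ x in (-Real.pi)..Real.pi, (f x)^2) * (t * t)
      + (2 * ∫ x in (-Real.pi)..Real.pi, f x * g x) * t
      + ∫ x in (-Real.pi)..Real.pi, (g x)^2 := by
    intro t
    have h0 : 0 ≤ ∫ x in (-Real.pi)..Real.pi, (t * f x + g x)^2 :=
      intervalIntegral.integral_nonneg hle fun x _ => sq_nonneg _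
    have h1 : ∫ x in (-Real.pi)..Real.pi, (t * f x + g x)^2 =
        ∫ x in (-Real.pi)..Real.pi, ((t * t) * (f x)^2 + (2 * t) * (f x * g x) + (g x)^2) := by
      congr 1
      funext x
      ring
    rw [h1, intervalIntegral.integral_add (Continuous.intervalIntegrable (by fun_prop) _ _)
      (Continuous.intervalIntegrable (by fun_prop) _ _),
      intervalIntegral.integral_add (Continuous.intervalIntegrable (by fun_prop) _ _)
      (Continuous.intervalIntegrable (by fun_prop) _ _),
      intervalIntegral.integral_const_mul, intervalIntegral.integral_const_mul] at h0
    linarith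
  have hd := discrim_le_zero key
  unfold discrim at hd
  unfold L2norm
  rw [← Real.sqrt_mul hA]
  apply Real.le_sqrt_of_sq_le
  nlinarith

lemma orth (j k : ℤ) : ∫ x in (-Real.pi)..Real.pi,
    Complex.exp (-(Complex.I * (k : ℂ) * (x : ℂ))) * Complex.exp (Complex.I * (j : ℂ) * (x : ℂ))
      = if j = k then 2 * (Real.pi : ℂ) else 0 := by
  have h1 : ∀ x : ℝ, Complex.exp (-(Complex.I * (k : ℂ) * (x : ℂ))) *
      Complex.exp (Complex.I * (j : ℂ) * (x : ℂ)) =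
      Complex.exp ((Complex.I * ((j : ℂ) - k)) * (x : ℂ)) := by
    intro x
    rw [← Complex.exp_add]
    congr 1
    ring
  simp_rw [h1]
  split_ifs with h
  · subst h
    simp
    ring
  · have hne : Complex.I * ((j : ℂ) - k) ≠ 0 := by
      refine mul_ne_zero Complex.I_ne_zero (sub_ne_zero.2 ?_)
      exact_mod_cast h
    rw [integral_exp_mul_complex hne]
    have : Complex.exp (Complex.I * ((j : ℂ) - k) * (Real.pi : ℂ)) =
        Complex.exp (Complex.I * ((j : ℂ) - k) * ((-Real.pi : ℝ) : ℂ)) := by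
      rw [Complex.exp_eq_exp_iff_exists_int]
      refine ⟨j - k, ?_⟩
      push_cast
      ring
    rw [this, sub_self, zero_div]

lemma fCoeff_eq {N : ℕ} {u : ℝ → ℝ} {c : ℤ → ℂ}
    (hc : ∀ x : ℝ, (u x : ℂ) = ∑ k ∈ Finset.Icc (-(N : ℤ)) (N : ℤ),
      c k * Complex.exp (Complex.I * (k : ℂ) * (x : ℂ)))
    {k : ℤ} (hk : k ∈ Finset.Icc (-(N : ℤ)) (N : ℤ)) : fCoeff u k = c k := by
  unfold fCoeff
  simp_rw [hc, Finset.mul_sum]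
  rw [intervalIntegral.integral_finsetSum]
  · have : ∀ j ∈ Finset.Icc (-(N : ℤ)) (N : ℤ), ∫ x in (-Real.pi)..Real.pi,
        Complex.exp (-(Complex.I * (k : ℂ) * (x : ℂ))) *
          (c j * Complex.exp (Complex.I * (j : ℂ) * (x : ℂ))) =
        if j = k then c j * (2 * (Real.pi : ℂ)) else 0 := by
      intro j _
      simp_rw [mul_left_comm _ (c j)]
      rw [intervalIntegral.integral_const_mul, orth]
      split_ifs <;> simp
    rw [Finset.sum_congr rfl this, Finset.sum_ite_eq' , if_pos hk]
    have : (Real.pi : ℂ) ≠ 0 := by exact_mod_cast Real.pi_ne_zero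
    field_simp
  · intro j _
    exact Continuous.intervalIntegrable (by fun_prop) _ _

lemma PN_continuous (N : ℕ) (g : ℝ → ℝ) : Continuous (PN N g) := by
  unfold PN
  exact Complex.continuous_re.comp (by fun_prop)

lemma PN_inner {N : ℕ} {e g : ℝ → ℝ} (he : InSN N e) (hg : Continuous g) :
    ∫ x in (-Real.pi)..Real.pi, PN N g x * e x = ∫ x in (-Real.pi)..Real.pi, g x * e x := by
  have hec : Continuous e := he.contDiff.continuous
  obtain ⟨c, hc⟩ := he
  have hpi : (Real.pi : ℂ) ≠ 0 := by exact_mod_cast Real.pi_ne_zero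
  have hc' : ∀ x : ℝ, (e x : ℂ) = ∑ k ∈ Finset.Icc (-(N : ℤ)) (N : ℤ),
      fCoeff e (-k) * Complex.exp (-(Complex.I * (k : ℂ) * (x : ℂ))) := by
    intro x
    rw [hc x]
    refine Finset.sum_bij' (fun k _ => -k) (fun k _ => -k) ?_ ?_ ?_ ?_ ?_
    · intro a ha
      simp only [Finset.mem_Icc] at ha ⊢
      omega
    · intro a ha
      simp only [Finset.mem_Icc] at ha ⊢
      omega
    · simp
    · simp
    · intro a ha
      rw [neg_neg, fCoeff_eq hc ha]
      push_cast
      ring_nf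
  -- complex version of the left side
  have hL : ∫ x in (-Real.pi)..Real.pi, (∑ k ∈ Finset.Icc (-(N : ℤ)) (N : ℤ),
      fCoeff g k * Complex.exp (Complex.I * (k : ℂ) * (x : ℂ))) * (e x : ℂ) =
      ∑ k ∈ Finset.Icc (-(N : ℤ)) (N : ℤ), 2 * Real.pi * fCoeff g k * fCoeff e (-k) := by
    simp_rw [Finset.sum_mul]
    rw [intervalIntegral.integral_finsetSum]
    · refine Finset.sum_congr rfl fun k _ => ?_
      simp_rw [mul_assoc (fCoeff g k)]
      rw [intervalIntegral.integral_const_mul]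
      rw [show fCoeff e (-k) = (1 / (2 * Real.pi)) *
        ∫ x in (-Real.pi)..Real.pi, Complex.exp (Complex.I * (k : ℂ) * (x : ℂ)) * (e x : ℂ) by
          simp [fCoeff]]
      field_simp
    · intro j _
      exact Continuous.intervalIntegrable (by fun_prop) _ _
  have hR : ∫ x in (-Real.pi)..Real.pi, (g x : ℂ) * (e x : ℂ) =
      ∑ k ∈ Finset.Icc (-(N : ℤ)) (N : ℤ), 2 * Real.pi * fCoeff g k * fCoeff e (-k) := by
    simp_rw [hc', Finset.mul_sum]
    rw [intervalIntegral.integral_finsetSum]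
    · refine Finset.sum_congr rfl fun k _ => ?_
      have : ∀ x : ℝ, (g x : ℂ) * (fCoeff e (-k) *
          Complex.exp (-(Complex.I * (k : ℂ) * (x : ℂ)))) =
          fCoeff e (-k) * (Complex.exp (-(Complex.I * (k : ℂ) * (x : ℂ))) * (g x : ℂ)) := by
        intro x
        ring
      simp_rw [this]
      rw [intervalIntegral.integral_const_mul]
      rw [show fCoeff g k = (1 / (2 * Real.pi)) *
        ∫ x in (-Real.pi)..Real.pi, Complex.exp (-(Complex.I * (k : ℂ) * (x : ℂ))) * (g x : ℂ)
          from rfl]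
      field_simp
    · intro j _
      exact Continuous.intervalIntegrable (by fun_prop) _ _
  have hre : ∫ x in (-Real.pi)..Real.pi, PN N g x * e x =
      Complex.reCLM (∫ x in (-Real.pi)..Real.pi, (∑ k ∈ Finset.Icc (-(N : ℤ)) (N : ℤ),
      fCoeff g k * Complex.exp (Complex.I * (k : ℂ) * (x : ℂ))) * (e x : ℂ)) := by
    rw [← ContinuousLinearMap.intervalIntegral_comp_comm]
    · congr 1
      funext x
      simp [PN]
    · exact Continuous.intervalIntegrable (by fun_prop) _ _
  rw [hre, hL, ← hR]
  simp_rw [← Complex.ofReal_mul]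
  rw [intervalIntegral.integral_ofReal]
  simp

lemma abs_le_LinfNorm {u : ℝ → ℝ} (hu : Continuous u) {x : ℝ}
    (hx : x ∈ Set.Icc (-Real.pi) Real.pi) : |u x| ≤ LinfNorm u :=
  le_csSup (isCompact_Icc.image hu.abs).bddAbove ⟨x, hx, rfl⟩

lemma L2norm_nonneg (u : ℝ → ℝ) : 0 ≤ L2norm u := Real.sqrt_nonneg _

lemma L2norm_sq (u : ℝ → ℝ) : L2norm u ^ 2 = ∫ x in (-Real.pi)..Real.pi, (u x)^2 :=
  Real.sq_sqrt (intervalIntegral.integral_nonneg (by linarith [Real.pi_pos])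
    fun x _ => sq_nonneg _)

lemma InSN.hasDerivs {N : ℕ} {u : ℝ → ℝ} (hu : InSN N u) :
    (∀ x, HasDerivAt u (deriv u x) x) ∧ (∀ x, HasDerivAt (deriv u) (deriv (deriv u) x) x) ∧
    (∀ x, HasDerivAt (deriv (deriv u)) (deriv (deriv (deriv u)) x) x) ∧
    Continuous (deriv (deriv (deriv u))) := by
  have h0 : ContDiff ℝ (9 + 1) u := hu.contDiff.of_le (by norm_num)
  have h1 : ContDiff ℝ (8 + 1) (deriv u) :=
    ((contDiff_succ_iff_deriv.1 h0).2.2).of_le (by norm_num)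
  have h2 : ContDiff ℝ (7 + 1) (deriv (deriv u)) :=
    ((contDiff_succ_iff_deriv.1 h1).2.2).of_le (by norm_num)
  have h3 : ContDiff ℝ 7 (deriv (deriv (deriv u))) := (contDiff_succ_iff_deriv.1 h2).2.2
  exact ⟨fun x => ((contDiff_succ_iff_deriv.1 h0).1 x).hasDerivAt,
    fun x => ((contDiff_succ_iff_deriv.1 h1).1 x).hasDerivAt,
    fun x => ((contDiff_succ_iff_deriv.1 h2).1 x).hasDerivAt, h3.continuous⟩

lemma continuous_of_hasDerivAt {u u' : ℝ → ℝ} (h : ∀ x, HasDerivAt u (u' x) x) :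
    Continuous u :=
  continuous_iff_continuousAt.2 fun x => (h x).continuousAt

lemma integral_dx3_mul {N : ℕ} {e : ℝ → ℝ} (he : InSN N e) :
    ∫ x in (-Real.pi)..Real.pi, dx3 e x * e x = 0 := by
  obtain ⟨h1, h2, h3, hc3⟩ := he.hasDerivs
  have hc0 := continuous_of_hasDerivAt h1
  have hp := he.periodic
  have hp1 := periodic_deriv hp
  have hp2 := periodic_deriv hp1
  refine integral_deriv_periodic (f := fun x => e x * deriv (deriv e) x - (deriv e x)^2 / 2)
    (fun x => ?_) (hc3.mul hc0) ?_
  · have := ((h1 x).mul (h3 x)).sub (((h2 x).pow 2).div_const 2)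
    refine this.congr_deriv ?_
    simp [dx3]
    ring
  · intro x
    simp only [hp x, hp1 x, hp2 x]

/-- One contraction step. -/
lemma step (N : ℕ) (l R : ℝ) (Y W Z Z' : ℝ → ℝ) (hW : InSN N W) (hZ : InSN N Z)
    (hZ' : InSN N Z')
    (hWeq : ∀ x : ℝ, W x = Y x + l * Fmap N W x)
    (hrec : ∀ x : ℝ, Z' x + l * dx3 Z' x
        = Y x - l * PN N (dx (fun y => (Z y)^2 / 2)) x)
    (hWR : LinfNorm W ≤ R) (hZR : LinfNorm Z ≤ R + 1) :
    L2norm (fun x => W x - Z' x) ^ 2 ≤ |l| * (R + 1) * L2norm (fun x => W x - Z x) *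
      L2norm (dx (fun x => W x - Z' x)) := by
  have he : InSN N (fun x => W x - Z' x) := hW.sub hZ'
  obtain ⟨e, hedef⟩ : ∃ e : ℝ → ℝ, e = fun x => W x - Z' x := ⟨_, rfl⟩
  rw [← hedef] at he ⊢
  obtain ⟨hW1, hW2, hW3, hWc3⟩ := hW.hasDerivs
  obtain ⟨hZ1, hZ2, hZ3, hZc3⟩ := hZ.hasDerivs
  obtain ⟨hV1, hV2, hV3, hVc3⟩ := hZ'.hasDerivs
  obtain ⟨he1, he2, he3, hec3⟩ := he.hasDerivs
  have hWc := continuous_of_hasDerivAt hW1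
  have hZc := continuous_of_hasDerivAt hZ1
  have hec := continuous_of_hasDerivAt he1
  have hWc1 := continuous_of_hasDerivAt hW2
  have hZc1 := continuous_of_hasDerivAt hZ2
  have hec1 := continuous_of_hasDerivAt he2
  have hd1 : deriv e = fun x => deriv W x - deriv Z' x := by
    funext x
    rw [hedef]
    exact ((hW1 x).sub (hV1 x)).deriv
  have hd2 : deriv (deriv e) = fun x => deriv (deriv W) x - deriv (deriv Z') x := by
    funext x
    rw [hd1]
    exact ((hW2 x).sub (hV2 x)).deriv
  have hd3 : ∀ x, dx3 e x = dx3 W x - dx3 Z' x := by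
    intro x
    unfold dx3
    rw [hd2]
    exact ((hW3 x).sub (hV3 x)).deriv
  have hg2 : dx (fun y => (Z y)^2 / 2) = fun y => Z y * deriv Z y := by
    funext x
    have := (((hZ1 x).pow 2).div_const 2).deriv
    unfold dx
    refine this.trans ?_
    simp
    ring
  have hpt : ∀ x, (e x)^2 = (-l) * (dx3 e x * e x) +
      ((-l) * (PN N (fun y => W y * deriv W y) x * e x) +
      l * (PN N (fun y => Z y * deriv Z y) x * e x)) := by
    intro x
    have h1 := hWeq x
    have h2 := hrec x
    rw [hg2] at h2
    simp only [Fmap, dx] at h1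
    have h3 := hd3 x
    have h4 : e x = W x - Z' x := by rw [hedef]
    have h5 : e x = -l * dx3 e x - l * PN N (fun y => W y * deriv W y) x +
        l * PN N (fun y => Z y * deriv Z y) x := by
      rw [h3]
      linear_combination h4 + h1 - h2
    linear_combination (e x) * h5
  have hPW := PN_continuous N (fun y => W y * deriv W y)
  have hPZ := PN_continuous N (fun y => Z y * deriv Z y)
  have hc3 : Continuous (dx3 e) := hec3
  have hmain : L2norm e ^ 2 =
      (-l) * (∫ x in (-Real.pi)..Real.pi, (W x * deriv W x) * e x) +
      l * (∫ x in (-Real.pi)..Real.pi, (Z x * deriv Z x) * e x) := by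
    rw [L2norm_sq]
    simp_rw [hpt]
    rw [intervalIntegral.integral_add (Continuous.intervalIntegrable (by fun_prop) _ _)
      (Continuous.intervalIntegrable (by fun_prop) _ _),
      intervalIntegral.integral_add (Continuous.intervalIntegrable (by fun_prop) _ _)
      (Continuous.intervalIntegrable (by fun_prop) _ _),
      intervalIntegral.integral_const_mul, intervalIntegral.integral_const_mul,
      intervalIntegral.integral_const_mul, integral_dx3_mul he,
      PN_inner (g := fun y => W y * deriv W y) he (hWc.mul hWc1),
      PN_inner (g := fun y => Z y * deriv Z y) he (hZc.mul hZc1)]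
    ring
  have hibp : ∫ x in (-Real.pi)..Real.pi, (((W x * deriv W x) * e x - (Z x * deriv Z x) * e x)
      + ((W x)^2 - (Z x)^2) / 2 * deriv e x) = 0 := by
    refine integral_deriv_periodic (f := fun x => ((W x)^2 - (Z x)^2) / 2 * e x)
      (fun x => ?_) (by fun_prop) ?_
    · have := ((((hW1 x).pow 2).sub ((hZ1 x).pow 2)).div_const 2).mul (he1 x)
      refine this.congr_deriv ?_
      simp
      ring
    · intro x
      simp only [hW.periodic x, hZ.periodic x, he.periodic x]
  rw [intervalIntegral.integral_add (Continuous.intervalIntegrable (by fun_prop) _ _)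
      (Continuous.intervalIntegrable (by fun_prop) _ _),
      intervalIntegral.integral_sub (Continuous.intervalIntegrable (by fun_prop) _ _)
      (Continuous.intervalIntegrable (by fun_prop) _ _)] at hibp
  have hmain2 : L2norm e ^ 2 =
      l * ∫ x in (-Real.pi)..Real.pi, ((W x)^2 - (Z x)^2) / 2 * deriv e x := by
    rw [hmain]
    linear_combination (-l) * hibp
  have hle : -Real.pi ≤ Real.pi := by linarith [Real.pi_pos]
  have hbound : |∫ x in (-Real.pi)..Real.pi, ((W x)^2 - (Z x)^2) / 2 * deriv e x| ≤
      (R + 1) * ∫ x in (-Real.pi)..Real.pi, |W x - Z x| * |deriv e x| := by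
    refine (intervalIntegral.abs_integral_le_integral_abs hle).trans ?_
    rw [← intervalIntegral.integral_const_mul]
    refine intervalIntegral.integral_mono_on hle
      (Continuous.intervalIntegrable (by fun_prop) _ _)
      (Continuous.intervalIntegrable (by fun_prop) _ _) fun x hx => ?_
    have h1 := (abs_le_LinfNorm hWc hx).trans hWR
    have h2 := (abs_le_LinfNorm hZc hx).trans hZR
    have h3 : |(W x + Z x) / 2| ≤ R + 1 := by
      rw [abs_le] at *
      constructor <;> linarith [h1.1, h1.2, h2.1, h2.2]
    rw [show ((W x)^2 - (Z x)^2) / 2 * deriv e x = (W x + Z x) / 2 * ((W x - Z x) * deriv e x)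
      by ring, abs_mul, abs_mul (W x - Z x)]
    exact mul_le_mul_of_nonneg_right h3 (by positivity)
  have hR1 : 0 ≤ R + 1 := by
    have := (abs_nonneg _).trans ((abs_le_LinfNorm hZc
      (Set.left_mem_Icc.2 hle)).trans hZR)
    exact this
  have hcs := cauchy_schwarz (f := fun x => |W x - Z x|) (g := fun x => |deriv e x|)
    (by fun_prop) (by fun_prop)
  have ha : ∀ u : ℝ → ℝ, L2norm (fun x => |u x|) = L2norm u := by
    intro u
    simp [L2norm]
  rw [ha (deriv e), ha (fun x => W x - Z x)] at hcs
  calc L2norm e ^ 2 ≤ |l| * |∫ x in (-Real.pi)..Real.pi, ((W x)^2 - (Z x)^2) / 2 * deriv e x| := by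
        rw [hmain2, ← abs_mul]
        exact le_abs_self _
    _ ≤ |l| * ((R + 1) * (L2norm (fun x => W x - Z x) * L2norm (deriv e))) := by
        refine mul_le_mul_of_nonneg_left (hbound.trans ?_) (abs_nonneg _)
        exact mul_le_mul_of_nonneg_left hcs hR1
    _ = _ := by
        unfold dx
        ring

/-- convergence of the inner fixed-point iteration: the iterates
`Z_{ν+1}` of `(I + (kb/2)∂ₓ³) Z_{ν+1} = Y − (kb/2) P_N ∂ₓ(Z_ν²/2)` satisfy
`‖Z* − Z_ν‖ ≤ Γ^ν ‖Z* − Z₀‖` and converge to `Z*` in L², provided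
`Γ = (C₀/2) k |b| N (R+1) < 1`. -/
theorem inner_iteration_convergence
    (N : ℕ) (hN : 1 ≤ N) (k : ℝ) (hk : 0 < k) (b : ℝ) (hb : b ≠ 0)
    (C₀ : ℝ) (hC₀ : ∀ ψ : ℝ → ℝ, InSN N ψ → L2norm (dx ψ) ≤ C₀ * N * L2norm ψ)
    (R : ℝ)
    (Y : ℝ → ℝ) (hY : InSN N Y)
    (Zstar : ℝ → ℝ) (hZstar : InSN N Zstar)
    (hZstarEq : ∀ x : ℝ, Zstar x = Y x + (k * b / 2) * Fmap N Zstar x)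
    (hZstarInf : LinfNorm Zstar ≤ R)
    (Z : ℕ → ℝ → ℝ) (hZ0 : ∀ x : ℝ, Z 0 x = Y x)
    (hZSN : ∀ ν : ℕ, InSN N (Z ν))
    (hZrec : ∀ ν : ℕ, ∀ x : ℝ,
      Z (ν+1) x + (k * b / 2) * dx3 (Z (ν+1)) x
        = Y x - (k * b / 2) * PN N (dx (fun y => (Z ν y)^2 / 2)) x)
    (hZInf : ∀ ν : ℕ, LinfNorm (Z ν) ≤ R + 1)
    (Γ : ℝ) (hΓdef : Γ = (C₀ / 2) * k * |b| * N * (R + 1)) (hΓ : Γ < 1) :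
    (∀ ν : ℕ, L2norm (fun x => Zstar x - Z ν x)
        ≤ Γ ^ ν * L2norm (fun x => Zstar x - Z 0 x)) ∧
    Filter.Tendsto (fun ν : ℕ => L2norm (fun x => Zstar x - Z ν x))
      Filter.atTop (nhds 0) := by
  have hle : -Real.pi ≤ Real.pi := by linarith [Real.pi_pos]
  have hNpos : (0 : ℝ) < N := by exact_mod_cast hN
  have hR1 : 0 ≤ R + 1 :=
    (abs_nonneg _).trans ((abs_le_LinfNorm (hZSN 0).contDiff.continuous
      (Set.left_mem_Icc.2 hle)).trans (hZInf 0))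
  have hC : 0 ≤ C₀ := by
    have h1 := (L2norm_nonneg _).trans (hC₀ _ (InSN.one N))
    have h2 : 0 < L2norm (fun _ => (1 : ℝ)) := by
      unfold L2norm
      apply Real.sqrt_pos.2
      simp
      exact Real.pi_pos
    have h3 : 0 < (N : ℝ) * L2norm (fun _ => (1 : ℝ)) := mul_pos hNpos h2
    rw [mul_assoc] at h1
    exact nonneg_of_mul_nonneg_left h1 h3
  have hΓ0 : 0 ≤ Γ := by
    rw [hΓdef]
    positivity
  have hstep : ∀ ν, L2norm (fun x => Zstar x - Z (ν + 1) x) ≤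
      Γ * L2norm (fun x => Zstar x - Z ν x) := by
    intro ν
    have h1 := step N (k * b / 2) R Y Zstar (Z ν) (Z (ν + 1)) hZstar (hZSN ν) (hZSN (ν + 1))
      hZstarEq (hZrec ν) hZstarInf (hZInf ν)
    have h2 := hC₀ _ (hZstar.sub (hZSN (ν + 1)))
    have hn0 := L2norm_nonneg (fun x => Zstar x - Z ν x)
    have hn1 := L2norm_nonneg (fun x => Zstar x - Z (ν + 1) x)
    have hl : |k * b / 2| = k * |b| / 2 := by
      rw [abs_div, abs_mul, abs_of_pos hk, abs_two]
    have h3 : L2norm (fun x => Zstar x - Z (ν + 1) x) ^ 2 ≤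
        (Γ * L2norm (fun x => Zstar x - Z ν x)) * L2norm (fun x => Zstar x - Z (ν + 1) x) := by
      refine h1.trans ((mul_le_mul_of_nonneg_left h2 (by positivity)).trans (le_of_eq ?_))
      rw [hl, hΓdef]
      ring
    rcases hn1.eq_or_lt with h | h
    · rw [← h]
      positivity
    · rw [sq] at h3
      exact le_of_mul_le_mul_right h3 h
  have hall : ∀ ν : ℕ, L2norm (fun x => Zstar x - Z ν x)
        ≤ Γ ^ ν * L2norm (fun x => Zstar x - Z 0 x) := by
    intro ν
    induction ν with
    | zero => simp
    | succ n ih =>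
      refine (hstep n).trans ((mul_le_mul_of_nonneg_left ih hΓ0).trans (le_of_eq ?_))
      ring
  refine ⟨hall, ?_⟩
  refine squeeze_zero (fun ν => L2norm_nonneg _) hall ?_
  have := (tendsto_pow_atTop_nhds_zero_of_lt_one hΓ0 hΓ).mul_const
    (L2norm (fun x => Zstar x - Z 0 x))
  simpa using this

end KdVSpec
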